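/- Let U ⊆ ℝⁿ be open, let g̃_{μν} : U → ℝ be smooth, symmetric and pointwise invertible with smooth inverse g̃^{μν}, let A_{iμ} : U → ℝ be smooth (i ∈ {1,2,3}), and let h > 0 be constant. Define Γ̃^σ_{μν} := (1/2) g̃^{σρ}(∂_μ g̃_{νρ} + ∂_ν g̃_{μρ} − ∂_ρ g̃_{μν}), F^μ_{βi} := (1/2) g̃^{αμ}(∂_α A_{βi} − ∂_β A_{αi} − (1/h) ε_{ijk} A_{jα} A_{kβ}), Γ^σ_{μν} := Γ̃^σ_{μν} − (1/h)(A_{μi} F^σ_{νi} + A_{νi} F^σ_{μi}), h̃^{ij} := (1/h) δ^{ij} + (1/h²) g̃^{μν} A_{iν} A_{jμ}, and let ∇ denote the covariant derivative determined by Γ acting on all Greek indices in the standard way (e.g. ∇_α T_β = ∂_α T_β − Γ^μ_{αβ} T_μ, ∇_μ F^μ_{βi} = ∂_μ F^μ_{βi} + Γ^μ_{μν} F^ν_{βi} − Γ^ν_{μβ} F^μ_{νi}, ∇_α A_{μi} = ∂_α A_{μi} − Γ^ν_{αμ} A_{νi}). Define R := −(1/4) h̃^{ii} + (1/2) g̃^{αβ}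 ( −∂_μ Γ^μ_{αβ} + ∂_α Γ^μ_{μβ} + Γ^μ_{αν} Γ^ν_{μβ} − Γ^μ_{μν} Γ^ν_{αβ} + (1/h) ∇_α (A_{iμ} F^μ_{iβ}) + (1/h²) A_{jμ} A_{iν} F^μ_{iα} F^ν_{jβ} − (2/h) A_{αi} ∇_μ F^μ_{βi} + (2/h²) A_{iβ} A_{νj} ( F^μ_{αj} F^ν_{μi} − F^μ_{αi} F^ν_{μj} ) + (1/h²) A_{iμ} A_{kα} F^μ_{βj} ε_{ijk} − (1/h) ( ∇_α A_{μi} + ∇_μ A_{αi} ) F^μ_{βi} + (1/(2h²)) A_{αi} A_{βi} ) + (1/2) h̃^{ij} F^μ_{νi} F^ν_{μj}, where F^μ_{iβ} := F^μ_{βi}. Then R = R̃_M − 3/(4h) + (1/(8h)) F^i_{αβ} F^{iαβ}, where R̃_M := (1/2) g̃^{αβ}( −∂_μ Γ̃^μ_{αβ} + ∂_α Γ̃^μ_{μβ} + Γ̃^μ_{αν} Γ̃^ν_{μβ} − Γ̃^μ_{μν} Γ̃^ν_{αβ} ), F^i_{αβ} := ∂_α A_{βi} − ∂_β A_{αi}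 − (1/h) ε_{ijk} A_{αj} A_{βk}, and F^{iαβ} := g̃^{αμ} g̃^{βν} F^i_{μν}. -/

import Mathlib

noncomputable section

/-- The totally antisymmetric Levi-Civita symbol on three indices with ε₀₁₂ = 1
(indices written 1,2,3 in the paper). -/
def eps (i j k : Fin 3) : ℝ :=
  ((((i : ℤ) - (j : ℤ)) * ((j : ℤ) - (k : ℤ)) * ((k : ℤ) - (i : ℤ))) / 2 : ℤ)

/-- The partial derivative `∂_μ f` of a function on `ℝⁿ`. -/
def pd {n : ℕ} {W : Type*} [NormedAddCommGroup W] [NormedSpace ℝ W]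
    (μ : Fin n) (f : (Fin n → ℝ) → W) : (Fin n → ℝ) → W :=
  fun x => fderiv ℝ f x (Pi.single μ 1)

open Finset in
/-- Contracting with a symmetric bivector ignores antisymmetric contributions. -/
theorem contract_eq_of_antisymm {ι : Type*} [Fintype ι] {G X Y Z : ι → ι → ℝ}
    (hG : ∀ α β, G α β = G β α) (h : ∀ α β, X α β = Y α β + (Z α β - Z β α)) :
    ∑ α, ∑ β, G α β * X α β = ∑ α, ∑ β, G α β * Y α β := by
  have hZ : ∑ α, ∑ β, G α β * Z β α = ∑ α, ∑ β, G α β * Z α β := by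
    rw [sum_comm]
    simp only [hG]
  simp only [h, mul_add, mul_sub, sum_add_distrib, sum_sub_distrib, hZ]
  ring

open Finset in
theorem sum_comm_reverse {ι κ τ : Type*} [Fintype ι] [Fintype κ] [Fintype τ]
    (f : ι → κ → τ → ℝ) : ∑ x, ∑ y, ∑ z, f x y z = ∑ z, ∑ y, ∑ x, f x y z := by
  rw [sum_comm' (t' := univ) (s' := fun _ => univ) (by simp), sum_comm_cycle, sum_comm_cycle]

open Finset in
theorem sum_comm_pairs {ι κ : Type*} [Fintype ι] [Fintype κ] (f : ι → ι → κ → κ → ℝ) :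
    ∑ x, ∑ y, ∑ i, ∑ j, f x y i j = ∑ i, ∑ j, ∑ x, ∑ y, f x y i j := by
  rw [sum_comm_cycle]
  exact sum_congr rfl fun _ _ => sum_comm_cycle

/-- The quadratic part of the Ricci tensor, polarised in the connection coefficients. -/
def ricciQuad {ι : Type*} [Fintype ι] (X Y : ι → ι → ι → ℝ) (α β : ι) : ℝ :=
  (∑ μ, ∑ ν, X μ α ν * Y ν μ β) - ∑ μ, ∑ ν, X μ μ ν * Y ν α β

/-- The symmetrised product `A_{μi} F^σ_{νi} + A_{νi} F^σ_{μi}`. -/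
def symProd {ι κ : Type*} [Fintype κ] (a : κ → ι → ℝ) (F : ι → ι → κ → ℝ) (σ μ ν : ι) : ℝ :=
  ∑ i, (a i μ * F σ ν i + a i ν * F σ μ i)

open Finset in
theorem ricciQuad_sub_mul {ι : Type*} [Fintype ι] (c : ℝ) {Γ C S : ι → ι → ι → ℝ}
    (h : ∀ σ μ ν, Γ σ μ ν = C σ μ ν - c * S σ μ ν) (α β : ι) :
    ricciQuad Γ Γ α β + c * (ricciQuad Γ S α β + ricciQuad S Γ α β)
      = ricciQuad C C α β - c ^ 2 * ricciQuad S S α β := by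
  simp only [ricciQuad, h, mul_sum, mul_add, mul_sub, ← sum_add_distrib, ← sum_sub_distrib]
  refine sum_congr rfl fun μ _ => sum_congr rfl fun ν _ => ?_
  ring

theorem symProd_comm {ι κ : Type*} [Fintype κ] {a : κ → ι → ℝ} {F : ι → ι → κ → ℝ}
    (σ μ ν : ι) : symProd a F σ μ ν = symProd a F σ ν μ :=
  Finset.sum_congr rfl fun _ _ => add_comm _ _

open Finset in
theorem sum_diag_eq_zero {ι κ : Type*} [Fintype ι] {F : ι → ι → κ → ℝ} {G : ι → ι → ℝ}
    {f : κ → ι → ι → ℝ} (hG : ∀ α β, G α β = G β α)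
    (hf : ∀ i α β, f i α β = -f i β α)
    (hF : ∀ μ β i, F μ β i = 1 / 2 * ∑ α, G α μ * f i α β) (i : κ) : ∑ μ, F μ μ i = 0 := by
  have h : ∑ μ, ∑ α, G α μ * f i α μ = -∑ μ, ∑ α, G α μ * f i α μ := by
    conv_lhs => rw [sum_comm]
    simp only [← sum_neg_distrib]
    refine sum_congr rfl fun μ _ => sum_congr rfl fun α _ => ?_
    rw [hG, hf]
    ring
  simp only [hF, ← mul_sum]
  linarith

section Algebra

open Finset

variable {ι κ : Type*} [Fintype ι] [Fintype κ] {a : κ → ι → ℝ} {F : ι → ι → κ → ℝ}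

theorem sum_symProd_diag (hF : ∀ i, ∑ μ, F μ μ i = 0) (β : ι) :
    ∑ μ, symProd a F μ μ β = ∑ i, ∑ μ, a i μ * F μ β i := by
  unfold symProd
  rw [sum_comm]
  simp only [sum_add_distrib, ← mul_sum, hF, mul_zero, add_zero]

theorem sum_sum_symProd_diag_mul (hF : ∀ i, ∑ μ, F μ μ i = 0) (w : ι → ℝ) :
    ∑ μ, ∑ ν, symProd a F μ μ ν * w ν = ∑ ν, w ν * ∑ i, ∑ μ, a i μ * F μ ν i := by
  rw [sum_comm]
  simp only [← sum_mul, sum_symProd_diag hF]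
  exact sum_congr rfl fun _ _ => mul_comm _ _

theorem ricciQuad_symProd_linear (hF : ∀ i, ∑ μ, F μ μ i = 0) {Γ : ι → ι → ι → ℝ}
    (hΓ : ∀ σ μ ν, Γ σ μ ν = Γ σ ν μ) :
    ∃ Z : ι → ι → ℝ, ∀ α β,
      ricciQuad Γ (symProd a F) α β + ricciQuad (symProd a F) Γ α β
        = -(∑ ν, Γ ν α β * ∑ i, ∑ μ, a i μ * F μ ν i)
          - 2 * (∑ i, a i α * ((∑ μ, ∑ ν, Γ μ μ ν * F ν β i) - ∑ μ, ∑ ν, Γ ν μ β * F μ ν i))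
          + (∑ i, ∑ μ, ((∑ ν, Γ ν α μ * a i ν) + ∑ ν, Γ ν μ α * a i ν) * F μ β i)
          + (Z α β - Z β α) := by
  let K : ι → ι → ℝ := fun α β => ∑ i, ∑ μ, (∑ ν, Γ ν α μ * a i ν) * F μ β i
  let H : ι → ι → ℝ := fun α β => ∑ i, a i β * ∑ μ, ∑ ν, Γ ν μ α * F μ ν i
  let M : ι → ι → ℝ := fun α β => ∑ i, a i α * ∑ μ, ∑ ν, Γ μ μ ν * F ν β i
  have h₁ : ∀ α β, ∑ μ, ∑ ν, Γ μ α ν * symProd a F ν μ β = K α β + H α β := by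
    intro α β
    simp only [K, H, symProd, mul_sum, sum_mul, mul_add, sum_add_distrib]
    congr 1
    · rw [sum_comm_reverse]
      simp only [mul_assoc]
    · rw [sum_comm_reverse]
      simp only [hΓ _ _ α, mul_left_comm]
  have h₂ : ∀ α β, ∑ μ, ∑ ν, symProd a F μ α ν * Γ ν μ β = K β α + H β α := by
    intro α β
    rw [← h₁, sum_comm]
    refine sum_congr rfl fun μ _ => sum_congr rfl fun ν _ => ?_
    rw [symProd_comm, hΓ μ, mul_comm]
  have h₃ : ∀ α β, ∑ μ, ∑ ν, Γ μ μ ν * symProd a F ν α β = M α β + M β α := by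
    intro α β
    simp only [M, symProd, mul_sum, mul_add, sum_add_distrib]
    congr 1 <;>
    · rw [sum_comm_reverse]
      refine sum_congr rfl fun i _ => ?_
      rw [sum_comm]
      simp only [mul_left_comm]
  refine ⟨fun α β => H α β + M α β - K α β, fun α β => ?_⟩
  have h₄ : ∑ i, ∑ μ, ((∑ ν, Γ ν α μ * a i ν) + ∑ ν, Γ ν μ α * a i ν) * F μ β i
      = 2 * K α β := by
    simp only [hΓ _ _ α, ← two_mul, mul_assoc, ← mul_sum, K]
  have h₅ : ∑ i, a i α * ((∑ μ, ∑ ν, Γ μ μ ν * F ν β i) - ∑ μ, ∑ ν, Γ ν μ β * F μ ν i)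
      = M α β - H β α := by
    simp only [mul_sub, sum_sub_distrib, M, H]
  simp only [ricciQuad, h₁, h₂, h₃, h₄, h₅, sum_sum_symProd_diag_mul hF]
  ring

theorem ricciQuad_symProd_self (hF : ∀ i, ∑ μ, F μ μ i = 0) :
    ∃ Z : ι → ι → ℝ, ∀ α β,
      -ricciQuad (symProd a F) (symProd a F) α β
          + (∑ i, ∑ j, ∑ μ, ∑ ν, a j μ * a i ν * F μ α i * F ν β j)
          + 2 * (∑ i, ∑ j, ∑ ν, a i β * a j ν *
              ((∑ μ, F μ α j * F ν μ i) - ∑ μ, F μ α i * F ν μ j))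
        = -(∑ i, ∑ j, a i α * a j β * ∑ μ, ∑ ν, F μ ν i * F ν μ j) + (Z α β - Z β α) := by
  let N : ι → ι → ℝ := fun α β => ∑ i, ∑ j, ∑ ν, a i α * a j ν * ∑ μ, F μ β j * F ν μ i
  let N' : ι → ι → ℝ := fun α β => ∑ i, ∑ j, ∑ ν, a i α * a j ν * ∑ μ, F μ β i * F ν μ j
  have h₁ : ∀ α β, ∑ μ, ∑ ν, symProd a F μ α ν * symProd a F ν μ β
      = (∑ i, ∑ j, a i α * a j β * ∑ μ, ∑ ν, F μ ν i * F ν μ j) + N α β + N β α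
        + ∑ i, ∑ j, ∑ μ, ∑ ν, a j μ * a i ν * F μ α i * F ν β j := by
    intro α β
    have hN : N β α = ∑ i, ∑ j, ∑ ν, a j β * a i ν * ∑ μ, F μ α i * F ν μ j := sum_comm
    rw [hN]
    simp only [symProd, sum_mul_sum]
    rw [sum_comm_pairs]
    simp only [N, mul_sum, ← sum_add_distrib]
    refine sum_congr rfl fun i _ => sum_congr rfl fun j _ => ?_
    rw [sum_congr rfl fun μ _ => sum_congr rfl fun ν _ => add_mul _ _ _]
    simp only [mul_add, sum_add_distrib]
    rw [sum_comm (f := fun μ ν => a i ν * F μ α i * (a j β * F ν μ j))]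
    simp only [← sum_add_distrib]
    refine sum_congr rfl fun μ _ => sum_congr rfl fun ν _ => ?_
    ring
  have h₂ : ∀ α β, ∑ μ, ∑ ν, symProd a F μ μ ν * symProd a F ν α β = N' α β + N' β α := by
    intro α β
    have hN' : ∀ α β, N' α β
        = ∑ ν, (∑ i, a i α * F ν β i) * ∑ j, ∑ μ, a j μ * F μ ν j := by
      intro α β
      simp only [N', sum_mul_sum]
      simp only [mul_sum]
      rw [sum_comm (s := univ (α := ι))]
      refine sum_congr rfl fun i _ => ?_
      rw [sum_comm_cycle]
      refine sum_congr rfl fun ν _ => sum_congr rfl fun j _ => sum_congr rfl fun μ _ => ?_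
      ring
    rw [sum_sum_symProd_diag_mul hF]
    simp only [hN', symProd, sum_add_distrib, add_mul]
  refine ⟨fun α β => N' α β - N α β, fun α β => ?_⟩
  have h₃ : ∑ i, ∑ j, ∑ ν, a i β * a j ν *
      ((∑ μ, F μ α j * F ν μ i) - ∑ μ, F μ α i * F ν μ j) = N β α - N' β α := by
    simp only [mul_sub, sum_sub_distrib, N, N']
  simp only [ricciQuad, h₁, h₂, h₃]
  ring

variable {G : ι → ι → ℝ} {f : κ → ι → ι → ℝ}

theorem sum_trace_sq (hG : ∀ α β, G α β = G β α) (hf : ∀ i α β, f i α β = -f i β α)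
    (hF : ∀ μ β i, F μ β i = 1 / 2 * ∑ α, G α μ * f i α β) :
    ∑ i, ∑ μ, ∑ ν, F μ ν i * F ν μ i
      = -(1 / 4) * ∑ i, ∑ α, ∑ β, ∑ μ, ∑ ν, f i α β * G α μ * G β ν * f i μ ν := by
  rw [mul_sum]
  refine sum_congr rfl fun i _ => ?_
  simp only [hF, mul_sum (a := (1 / 2 : ℝ)), sum_mul_sum]
  rw [sum_comm_pairs, mul_sum]
  refine sum_congr rfl fun α _ => ?_
  rw [sum_comm_reverse]
  simp only [mul_sum]
  refine sum_congr rfl fun β _ => sum_congr rfl fun μ _ => sum_congr rfl fun ν _ => ?_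
  rw [hf i ν μ, hG ν β]
  ring

theorem contract_mul_sum
    (hF : ∀ μ β i, F μ β i = 1 / 2 * ∑ α, G α μ * f i α β) (hG : ∀ α β, G α β = G β α) :
    ∑ α, ∑ β, G α β * ∑ i, ∑ μ, f i μ α * F μ β i
      = 1 / 2 * ∑ i, ∑ α, ∑ β, ∑ μ, ∑ ν, f i α β * G α μ * G β ν * f i μ ν := by
  simp only [hF, mul_sum]
  rw [sum_comm_cycle (u := univ (α := κ))]
  refine sum_congr rfl fun i _ => ?_
  rw [sum_comm_pairs]
  refine sum_congr rfl fun α _ => ?_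
  rw [sum_comm]
  refine sum_congr rfl fun β _ => sum_congr rfl fun μ _ => sum_congr rfl fun ν _ => ?_
  rw [hG α μ]
  ring

/-- The pointwise Kaluza-Klein reduction: all derivatives enter as independent real parameters, and
only the antisymmetric part of `E = ∂A` is tied to the curvature `f`. -/
theorem contract_riemann [DecidableEq κ] (hG : ∀ α β, G α β = G β α) (hf : ∀ i α β, f i α β = -f i β α)
    (hF : ∀ μ β i, F μ β i = 1 / 2 * ∑ α, G α μ * f i α β) {h : ℝ}
    {C Γ : ι → ι → ι → ℝ} (hC : ∀ σ μ ν, C σ μ ν = C σ ν μ)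
    (hΓ : ∀ σ μ ν, Γ σ μ ν = C σ μ ν - 1 / h * symProd a F σ μ ν)
    {e : κ → κ → κ → ℝ} (he : ∀ i j k, e i j k = -e j i k)
    {E : κ → ι → ι → ℝ}
    (hE : ∀ i μ α, E i μ α - E i α μ = f i μ α + 1 / h * ∑ j, ∑ k, e i j k * a j μ * a k α)
    {dF : ι → κ → ℝ} {dC dC' dΓ dΓ' dP : ι → ι → ℝ}
    (hdΓ : ∀ α β, dΓ α β = dC α β - 1 / h * ∑ i,
      (((∑ μ, E i μ α * F μ β i) + a i α * dF β i)
        + ((∑ μ, E i μ β * F μ α i) + a i β * dF α i)))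
    (hdΓ' : ∀ α β, dΓ' α β = dC' α β - 1 / h * dP α β)
    {H : κ → κ → ℝ}
    (hH : ∀ i j, H i j = 1 / h * (if i = j then 1 else 0)
      + 1 / h ^ 2 * ∑ μ, ∑ ν, G μ ν * a i ν * a j μ) :
    -(1 / 4) * (∑ i, H i i) + 1 / 2 * ∑ α, ∑ β, G α β *
        (-dΓ α β + dΓ' α β + (∑ μ, ∑ ν, Γ μ α ν * Γ ν μ β) - (∑ μ, ∑ ν, Γ μ μ ν * Γ ν α β)
          + 1 / h * (dP α β - ∑ ν, Γ ν α β * ∑ i, ∑ μ, a i μ * F μ ν i)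
          + 1 / h ^ 2 * (∑ i, ∑ j, ∑ μ, ∑ ν, a j μ * a i ν * F μ α i * F ν β j)
          - 2 / h * (∑ i, a i α *
              (dF β i + (∑ μ, ∑ ν, Γ μ μ ν * F ν β i) - ∑ μ, ∑ ν, Γ ν μ β * F μ ν i))
          + 2 / h ^ 2 * (∑ i, ∑ j, ∑ ν, a i β * a j ν *
              ((∑ μ, F μ α j * F ν μ i) - ∑ μ, F μ α i * F ν μ j))
          + 1 / h ^ 2 * (∑ i, ∑ j, ∑ k, ∑ μ, a i μ * a k α * F μ β j * e i j k)
          - 1 / h * (∑ i, ∑ μ, ((E i α μ - ∑ ν, Γ ν α μ * a i ν)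
              + (E i μ α - ∑ ν, Γ ν μ α * a i ν)) * F μ β i)
          + 1 / (2 * h ^ 2) * ∑ i, a i α * a i β)
        + 1 / 2 * ∑ i, ∑ j, H i j * ∑ μ, ∑ ν, F μ ν i * F ν μ j
      = 1 / 2 * (∑ α, ∑ β, G α β * (-dC α β + dC' α β
          + (∑ μ, ∑ ν, C μ α ν * C ν μ β) - ∑ μ, ∑ ν, C μ μ ν * C ν α β))
        - Fintype.card κ / (4 * h)
        + 1 / (8 * h) * ∑ i, ∑ α, ∑ β, ∑ μ, ∑ ν, f i α β * G α μ * G β ν * f i μ ν := by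
  have htr := sum_diag_eq_zero hG hf hF
  have hΓsymm : ∀ σ μ ν, Γ σ μ ν = Γ σ ν μ := by
    intro σ μ ν
    rw [hΓ, hΓ, hC, symProd_comm]
  obtain ⟨Z, hZ⟩ := ricciQuad_symProd_linear (a := a) htr hΓsymm
  obtain ⟨Z', hZ'⟩ := ricciQuad_symProd_self (a := a) htr
  have hcurv : ∀ α β, (∑ i, ∑ μ, E i μ α * F μ β i) - (∑ i, ∑ μ, E i α μ * F μ β i)
      + 1 / h * (∑ i, ∑ j, ∑ k, ∑ μ, a i μ * a k α * F μ β j * e i j k)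
      = ∑ i, ∑ μ, f i μ α * F μ β i := by
    intro α β
    have : ∑ i, ∑ j, ∑ k, ∑ μ, a i μ * a k α * F μ β j * e i j k
        = -∑ i, ∑ μ, (∑ j, ∑ k, e i j k * a j μ * a k α) * F μ β i := by
      rw [sum_comm]
      simp only [← sum_neg_distrib]
      refine sum_congr rfl fun i _ => ?_
      rw [sum_comm_cycle, sum_neg_distrib]
      simp only [sum_mul, ← sum_neg_distrib]
      refine sum_congr rfl fun μ _ => sum_congr rfl fun j _ => sum_congr rfl fun k _ => ?_
      rw [he]
      ring
    rw [this]
    simp only [mul_neg, mul_sum, ← sum_sub_distrib, ← sum_neg_distrib, ← sum_add_distrib]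
    refine sum_congr rfl fun i _ => sum_congr rfl fun μ _ => ?_
    have := hE i μ α
    linear_combination F μ β i * this
  let V : ι → ι → ℝ := fun α β => ∑ i, ∑ μ, E i μ α * F μ β i
  let W : ι → ι → ℝ := fun α β => ∑ i, a i α * dF β i
  rw [contract_eq_of_antisymm hG (Y := fun α β =>
      (-dC α β + dC' α β + (∑ μ, ∑ ν, C μ α ν * C ν μ β) - ∑ μ, ∑ ν, C μ μ ν * C ν α β)
      + 1 / h * (∑ i, ∑ μ, f i μ α * F μ β i)
      - 1 / h ^ 2 * (∑ i, ∑ j, a i α * a j β * ∑ μ, ∑ ν, F μ ν i * F ν μ j)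
      + 1 / (2 * h ^ 2) * ∑ i, a i α * a i β)
    (Z := fun α β => -(1 / h) * (V α β + W α β + Z α β) + 1 / h ^ 2 * Z' α β)]
  · have hcomm : ∀ T : κ → κ → ℝ, ∑ i, ∑ j, (∑ α, ∑ β, G α β * a i β * a j α) * T i j
        = ∑ α, ∑ β, G α β * ∑ i, ∑ j, a i α * a j β * T i j := by
      intro T
      simp only [sum_mul, mul_sum]
      rw [sum_comm_pairs, sum_comm]
      refine sum_congr rfl fun α _ => sum_congr rfl fun β _ => sum_congr rfl fun i _ =>
        sum_congr rfl fun j _ => ?_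
      rw [hG β α]
      ring
    have hdiag : ∀ T : κ → κ → ℝ, ∑ i, ∑ j, (if i = j then 1 else 0) * T i j = ∑ i, T i i := by
      simp
    have htrace : ∑ i, H i i
        = Fintype.card κ / h + 1 / h ^ 2 * ∑ α, ∑ β, G α β * ∑ i, a i α * a i β := by
      have := hcomm fun i j => if i = j then 1 else 0
      simp only [mul_ite, mul_one, mul_zero, sum_ite_eq, mem_univ, if_true] at this
      simp only [hH, if_true, mul_one, sum_add_distrib, ← mul_sum (a := 1 / h ^ 2), this]
      simp [div_eq_mul_inv]
    have hH' : ∑ i, ∑ j, H i j * ∑ μ, ∑ ν, F μ ν i * F ν μ j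
        = 1 / h * (∑ i, ∑ μ, ∑ ν, F μ ν i * F ν μ i) + 1 / h ^ 2 * ∑ α, ∑ β, G α β *
          ∑ i, ∑ j, a i α * a j β * ∑ μ, ∑ ν, F μ ν i * F ν μ j := by
      rw [← hcomm, ← hdiag fun i j => ∑ μ, ∑ ν, F μ ν i * F ν μ j]
      simp only [hH, mul_sum (a := 1 / h), mul_sum (a := 1 / h ^ 2), ← sum_add_distrib]
      refine sum_congr rfl fun i _ => sum_congr rfl fun j _ => ?_
      simp only [← mul_sum (a := 1 / h ^ 2)]
      ring
    have hYM := contract_mul_sum hF hG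
    rw [htrace, hH', sum_trace_sq hG hf hF]
    simp only [mul_add (G _ _), mul_sub (G _ _), mul_left_comm (G _ _) (1 / h),
      mul_left_comm (G _ _) (1 / h ^ 2), mul_left_comm (G _ _) (1 / (2 * h ^ 2)),
      sum_add_distrib, sum_sub_distrib, ← mul_sum (a := 1 / h), ← mul_sum (a := 1 / h ^ 2),
      ← mul_sum (a := 1 / (2 * h ^ 2)), hYM]
    ring
  · intro α β
    have hquad := ricciQuad_sub_mul (1 / h) hΓ α β
    rw [hZ] at hquad
    have hself := hZ' α β
    have hdΓ'' : dΓ α β = dC α β - 1 / h * (V α β + W α β + (V β α + W β α)) := by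
      simp only [hdΓ, V, W, sum_add_distrib]
    have hdiv : ∑ i, a i α *
        (dF β i + (∑ μ, ∑ ν, Γ μ μ ν * F ν β i) - ∑ μ, ∑ ν, Γ ν μ β * F μ ν i)
        = W α β + ∑ i, a i α *
          ((∑ μ, ∑ ν, Γ μ μ ν * F ν β i) - ∑ μ, ∑ ν, Γ ν μ β * F μ ν i) := by
      simp only [W, add_sub_assoc, mul_add, sum_add_distrib]
    have hsymm : ∑ i, ∑ μ, ((E i α μ - ∑ ν, Γ ν α μ * a i ν)
          + (E i μ α - ∑ ν, Γ ν μ α * a i ν)) * F μ β i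
        = (∑ i, ∑ μ, E i α μ * F μ β i) + V α β
          - ∑ i, ∑ μ, ((∑ ν, Γ ν α μ * a i ν) + ∑ ν, Γ ν μ α * a i ν) * F μ β i := by
      simp only [V, add_mul, sub_mul, sum_add_distrib, sum_sub_distrib]
      ring
    have hcurv' : V α β - _ + _ = _ := hcurv α β
    rw [← hcurv', hdΓ'', hdΓ', hdiv, hsymm]
    simp only [ricciQuad] at hquad hself
    linear_combination hquad + 1 / h ^ 2 * hself

end Algebra

section PartialDerivative

variable {n : ℕ} {f g : (Fin n → ℝ) → ℝ} {x : Fin n → ℝ}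

theorem pd_sub (hf : DifferentiableAt ℝ f x) (hg : DifferentiableAt ℝ g x) (μ : Fin n) :
    pd μ (fun y => f y - g y) x = pd μ f x - pd μ g x := by
  simp [pd, fderiv_fun_sub hf hg]

theorem pd_add (hf : DifferentiableAt ℝ f x) (hg : DifferentiableAt ℝ g x) (μ : Fin n) :
    pd μ (fun y => f y + g y) x = pd μ f x + pd μ g x := by
  simp [pd, fderiv_fun_add hf hg]

theorem pd_mul (hf : DifferentiableAt ℝ f x) (hg : DifferentiableAt ℝ g x) (μ : Fin n) :
    pd μ (fun y => f y * g y) x = pd μ f x * g x + f x * pd μ g x := by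
  simp [pd, fderiv_fun_mul hf hg]
  ring

theorem pd_const_mul (c : ℝ) (hf : DifferentiableAt ℝ f x) (μ : Fin n) :
    pd μ (fun y => c * f y) x = c * pd μ f x := by
  simp [pd, fderiv_const_mul hf c]

theorem pd_sum {κ : Type*} [Fintype κ] {f : κ → (Fin n → ℝ) → ℝ}
    (hf : ∀ i, DifferentiableAt ℝ (f i) x) (μ : Fin n) :
    pd μ (fun y => ∑ i, f i y) x = ∑ i, pd μ (f i) x := by
  simp [pd, fderiv_fun_sum fun i _ => hf i]

theorem contDiffOn_pd {U : Set (Fin n → ℝ)} (hU : IsOpen U)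
    (hf : ContDiffOn ℝ (⊤ : ℕ∞) f U) (μ : Fin n) : ContDiffOn ℝ (⊤ : ℕ∞) (pd μ f) U :=
  (hf.fderiv_of_isOpen hU (by simp)).clm_apply contDiffOn_const

end PartialDerivative

theorem eps_swap_left (i j k : Fin 3) : eps i j k = -eps j i k := by
  fin_cases i <;> fin_cases j <;> fin_cases k <;> simp [eps]

theorem eps_swap_right (i j k : Fin 3) : eps i j k = -eps i k j := by
  fin_cases i <;> fin_cases j <;> fin_cases k <;> simp [eps]

/-- The Ricci scalar (QRG conventions) of the product of spacetime and a constant round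
fuzzy sphere of metric `h δ_{ij}` equals `R̃_M − 3/(4h) + (1/(8h)) F^i_{αβ} F^{iαβ}`. -/
theorem stmt17 (n : ℕ) (hn : 1 ≤ n)
    (U : Set (Fin n → ℝ)) (hU : IsOpen U)
    (gt gtinv : Fin n → Fin n → (Fin n → ℝ) → ℝ)
    (A : Fin 3 → Fin n → (Fin n → ℝ) → ℝ)
    (h0 : ℝ) (hh0 : 0 < h0)
    (hgt_smooth : ∀ μ ν, ContDiffOn ℝ (⊤ : ℕ∞) (gt μ ν) U)
    (hgtinv_smooth : ∀ μ ν, ContDiffOn ℝ (⊤ : ℕ∞) (gtinv μ ν) U)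
    (hA_smooth : ∀ i μ, ContDiffOn ℝ (⊤ : ℕ∞) (A i μ) U)
    (hgt_symm : ∀ μ ν x, gt μ ν x = gt ν μ x)
    (hgt_inv : ∀ x ∈ U, ∀ μ ν, ∑ ρ, gt μ ρ x * gtinv ρ ν x = if μ = ν then 1 else 0)
    (hgt_inv' : ∀ x ∈ U, ∀ μ ν, ∑ ρ, gtinv μ ρ x * gt ρ ν x = if μ = ν then 1 else 0)
    -- Γ̃, F, Γ, h̃
    (Γt : Fin n → Fin n → Fin n → (Fin n → ℝ) → ℝ)
    (hΓt : ∀ σ μ ν x, Γt σ μ ν x = (1/2) * ∑ ρ, gtinv σ ρ x *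
        (pd μ (gt ν ρ) x + pd ν (gt μ ρ) x - pd ρ (gt μ ν) x))
    (F : Fin n → Fin n → Fin 3 → (Fin n → ℝ) → ℝ)
    (hF : ∀ μ' β i x, F μ' β i x = (1/2) * ∑ α, gtinv α μ' x *
        (pd α (A i β) x - pd β (A i α) x - (1/h0) * ∑ j, ∑ k, eps i j k * A j α x * A k β x))
    (Γ : Fin n → Fin n → Fin n → (Fin n → ℝ) → ℝ)
    (hΓ : ∀ σ μ ν x, Γ σ μ ν x = Γt σ μ ν x
        - (1/h0) * ∑ i, (A i μ x * F σ ν i x + A i ν x * F σ μ i x))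
    (ht : Fin 3 → Fin 3 → (Fin n → ℝ) → ℝ)
    (hht : ∀ i j x, ht i j x = (1/h0) * (if i = j then 1 else 0)
        + (1/h0^2) * ∑ μ, ∑ ν, gtinv μ ν x * A i ν x * A j μ x)
    -- the Ricci scalar on the product
    (R : (Fin n → ℝ) → ℝ)
    (hR : ∀ x, R x = -(1/4) * (∑ i, ht i i x)
      + (1/2) * ∑ α, ∑ β, gtinv α β x *
        ( -(∑ μ, pd μ (Γ μ α β) x) + (∑ μ, pd α (Γ μ μ β) x)
          + (∑ μ, ∑ ν, Γ μ α ν x * Γ ν μ β x) - (∑ μ, ∑ ν, Γ μ μ ν x * Γ ν α β x)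
          + (1/h0) * (pd α (fun y => ∑ i, ∑ μ, A i μ y * F μ β i y) x
              - ∑ ν, Γ ν α β x * ∑ i, ∑ μ, A i μ x * F μ ν i x)
          + (1/h0^2) * (∑ i, ∑ j, ∑ μ, ∑ ν, A j μ x * A i ν x * F μ α i x * F ν β j x)
          - (2/h0) * (∑ i, A i α x *
              ((∑ μ, pd μ (F μ β i) x) + (∑ μ, ∑ ν, Γ μ μ ν x * F ν β i x)
                - ∑ μ, ∑ ν, Γ ν μ β x * F μ ν i x))
          + (2/h0^2) * (∑ i, ∑ j, ∑ ν, A i β x * A j ν x *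
              ((∑ μ, F μ α j x * F ν μ i x) - ∑ μ, F μ α i x * F ν μ j x))
          + (1/h0^2) * (∑ i, ∑ j, ∑ k, ∑ μ, A i μ x * A k α x * F μ β j x * eps i j k)
          - (1/h0) * (∑ i, ∑ μ,
              ((pd α (A i μ) x - ∑ ν, Γ ν α μ x * A i ν x)
                + (pd μ (A i α) x - ∑ ν, Γ ν μ α x * A i ν x)) * F μ β i x)
          + (1/(2*h0^2)) * ∑ i, A i α x * A i β x )
      + (1/2) * ∑ i, ∑ j, ht i j x * ∑ μ, ∑ ν, F μ ν i x * F ν μ j x)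
    -- the spacetime Ricci scalar and Yang-Mills curvature
    (RtM : (Fin n → ℝ) → ℝ)
    (hRtM : ∀ x, RtM x = (1/2) * ∑ α, ∑ β, gtinv α β x *
        ( -(∑ μ, pd μ (Γt μ α β) x) + (∑ μ, pd α (Γt μ μ β) x)
          + (∑ μ, ∑ ν, Γt μ α ν x * Γt ν μ β x) - ∑ μ, ∑ ν, Γt μ μ ν x * Γt ν α β x))
    (Fg : Fin 3 → Fin n → Fin n → (Fin n → ℝ) → ℝ)
    (hFg : ∀ i α β x, Fg i α β x = pd α (A i β) x - pd β (A i α) x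
        - (1/h0) * ∑ j, ∑ k, eps i j k * A j α x * A k β x) :
    ∀ x ∈ U, R x = RtM x - 3/(4*h0)
      + (1/(8*h0)) * ∑ i, ∑ α, ∑ β, ∑ μ, ∑ ν,
          Fg i α β x * gtinv α μ x * gtinv β ν x * Fg i μ ν x := by
  intro x hx
  have hΓtS : ∀ σ μ ν, ContDiffOn ℝ (⊤ : ℕ∞) (Γt σ μ ν) U := by
    intro σ μ ν
    rw [funext (hΓt σ μ ν)]
    have hpd := fun μ ν ρ => contDiffOn_pd hU (hgt_smooth μ ν) ρ
    exact contDiffOn_const.mul (ContDiffOn.sum fun ρ _ =>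
      (hgtinv_smooth σ ρ).mul (((hpd ν ρ μ).add (hpd μ ρ ν)).sub (hpd μ ν ρ)))
  have hFS : ∀ μ β i, ContDiffOn ℝ (⊤ : ℕ∞) (F μ β i) U := by
    intro μ β i
    rw [funext (hF μ β i)]
    have hpd := fun i μ ρ => contDiffOn_pd hU (hA_smooth i μ) ρ
    exact contDiffOn_const.mul (ContDiffOn.sum fun α _ => (hgtinv_smooth α μ).mul
      (((hpd i β α).sub (hpd i α β)).sub (contDiffOn_const.mul (ContDiffOn.sum fun j _ =>
        ContDiffOn.sum fun k _ => (contDiffOn_const.mul (hA_smooth j α)).mul (hA_smooth k β)))))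
  have hdiff : ∀ {f : (Fin n → ℝ) → ℝ}, ContDiffOn ℝ (⊤ : ℕ∞) f U → DifferentiableAt ℝ f x :=
    fun hf => (hf.contDiffAt (hU.mem_nhds hx)).differentiableAt (by simp)
  have hΓtD := fun σ μ ν => hdiff (hΓtS σ μ ν)
  have hFD := fun μ β i => hdiff (hFS μ β i)
  have hAD := fun i μ => hdiff (hA_smooth i μ)
  have hgtinv_symm : ∀ y ∈ U, ∀ μ ν, gtinv μ ν y = gtinv ν μ y := by
    intro y hy μ ν
    let M : Matrix (Fin n) (Fin n) ℝ := .of fun μ ν => gt μ ν y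
    let N : Matrix (Fin n) (Fin n) ℝ := .of fun μ ν => gtinv μ ν y
    have hMN : M * N = 1 := by
      ext μ ν
      simpa [M, N, Matrix.mul_apply, Matrix.one_apply] using hgt_inv y hy μ ν
    have hM : M.transpose = M := by
      ext μ ν
      exact hgt_symm ν μ y
    have hNM : N.transpose * M = 1 := by
      rw [← hM, ← Matrix.transpose_mul, hMN, Matrix.transpose_one]
    have hN : N.transpose = N := left_inv_eq_right_inv hNM hMN
    exact congrFun (congrFun hN ν) μ
  have hΓt_symm : ∀ σ μ ν y, Γt σ μ ν y = Γt σ ν μ y := by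
    intro σ μ ν y
    rw [hΓt, hΓt, funext (hgt_symm μ ν)]
    simp only [add_comm]
  have hFg_antisymm : ∀ y i α β, Fg i α β y = -Fg i β α y := by
    intro y i α β
    have : ∑ j, ∑ k, eps i j k * A j α y * A k β y
        = -∑ j, ∑ k, eps i j k * A j β y * A k α y := by
      rw [Finset.sum_comm]
      simp only [← Finset.sum_neg_distrib]
      refine Finset.sum_congr rfl fun j _ => Finset.sum_congr rfl fun k _ => ?_
      rw [eps_swap_right]
      ring
    rw [hFg, hFg, this]
    ring
  have hF' : ∀ y μ β i, F μ β i y = 1 / 2 * ∑ α, gtinv α μ y * Fg i α β y := by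
    simp only [hF, hFg, implies_true]
  have htr : ∀ y ∈ U, ∀ i, ∑ μ, F μ μ i y = 0 := fun y hy =>
    sum_diag_eq_zero (hgtinv_symm y hy) (hFg_antisymm y) (hF' y)
  have hdΓ : ∀ α β, ∑ μ, pd μ (Γ μ α β) x = ∑ μ, pd μ (Γt μ α β) x - 1 / h0 * ∑ i,
      (((∑ μ, pd μ (A i α) x * F μ β i x) + A i α x * ∑ μ, pd μ (F μ β i) x)
        + ((∑ μ, pd μ (A i β) x * F μ α i x) + A i β x * ∑ μ, pd μ (F μ α i) x)) := by
    intro α β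
    have h : ∀ μ, pd μ (Γ μ α β) x = pd μ (Γt μ α β) x - 1 / h0 * ∑ i,
        ((pd μ (A i α) x * F μ β i x + A i α x * pd μ (F μ β i) x)
          + (pd μ (A i β) x * F μ α i x + A i β x * pd μ (F μ α i) x)) := by
      intro μ
      have hp := fun i α β => (hAD i α).fun_mul (hFD μ β i)
      have hs := fun i => (hp i α β).fun_add (hp i β α)
      rw [funext (hΓ μ α β), pd_sub (hΓtD μ α β) ((DifferentiableAt.fun_sum fun i _ =>
        hs i).const_mul _), pd_const_mul _ (DifferentiableAt.fun_sum fun i _ => hs i), pd_sum hs]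
      simp only [pd_add (hp _ α β) (hp _ β α), pd_mul (hAD _ _) (hFD _ _ _)]
    simp only [h, Finset.sum_sub_distrib, ← Finset.mul_sum]
    rw [Finset.sum_comm]
    simp only [Finset.sum_add_distrib, Finset.mul_sum]
  have hdΓ' : ∀ α β, ∑ μ, pd α (Γ μ μ β) x = ∑ μ, pd α (Γt μ μ β) x
      - 1 / h0 * pd α (fun y => ∑ i, ∑ μ, A i μ y * F μ β i y) x := by
    intro α β
    have hP : DifferentiableAt ℝ (fun y => ∑ i, ∑ μ, A i μ y * F μ β i y) x :=
      DifferentiableAt.fun_sum fun i _ => DifferentiableAt.fun_sum fun μ _ =>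
        (hAD i μ).fun_mul (hFD μ β i)
    have hΓD : ∀ μ, DifferentiableAt ℝ (Γ μ μ β) x := by
      intro μ
      rw [funext (hΓ μ μ β)]
      exact (hΓtD μ μ β).fun_sub ((DifferentiableAt.fun_sum fun i _ =>
        ((hAD i μ).fun_mul (hFD μ β i)).fun_add ((hAD i β).fun_mul (hFD μ μ i))).const_mul _)
    have hev : (fun y => ∑ μ, Γ μ μ β y) =ᶠ[nhds x] fun y => (∑ μ, Γt μ μ β y)
        - 1 / h0 * ∑ i, ∑ μ, A i μ y * F μ β i y := by
      filter_upwards [hU.mem_nhds hx] with y hy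
      rw [← sum_symProd_diag (a := fun i μ => A i μ y) (F := fun μ β i => F μ β i y) (htr y hy)]
      simp only [hΓ, Finset.sum_sub_distrib, ← Finset.mul_sum, symProd]
    rw [← pd_sum hΓD, ← pd_sum fun μ => hΓtD μ μ β, ← pd_const_mul _ hP, ← pd_sub
      (DifferentiableAt.fun_sum fun μ _ => hΓtD μ μ β) (hP.const_mul _)]
    simp only [pd, hev.fderiv_eq]
  have key := contract_riemann (a := fun i μ => A i μ x) (F := fun μ β i => F μ β i x)
    (f := fun i α β => Fg i α β x) (hgtinv_symm x hx) (hFg_antisymm x) (hF' x)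
    (C := fun σ μ ν => Γt σ μ ν x) (Γ := fun σ μ ν => Γ σ μ ν x)
    (fun σ μ ν => hΓt_symm σ μ ν x) (fun σ μ ν => hΓ σ μ ν x) eps_swap_left
    (E := fun i μ α => pd μ (A i α) x) (fun i μ α => by rw [hFg]; ring)
    hdΓ hdΓ' (fun i j => hht i j x)
  rw [hR, hRtM, key]
  simp
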